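/- Let α and β be real numbers with 0 < α < 1 and 0 < β < 1. For real y > 2, define F(y) as the value of the continued fraction (y+2(1−α−β))/2 + K_{m=1}^∞(a_m/b_m(y)), where for m ≥ 1: a_{2m} = (2m−α−β)(2m−α)(2m−β)/4, a_{2m−1} = (2m−2+α+β)(2m−2+α)(2m−2+β)/4, b_{2m}(y) = y+2(1−α−β), b_{2m−1}(y) = (2m−1)y. Then for every real x > 2, the continued fractions defining F(x) and F(x+2) converge to positive real values, and F(x)/F(x+2) = (x+2−α−2β)(x+2)(x+2−2α−β) / [(x+2−α)(x+4−2α−2β)(x+2−β)]. -/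

import Mathlib

/-!
Put two consecutive numerators and denominators in a `2 × 2` matrix, so that one step of the
continued fraction is left multiplication by a transfer matrix. Explicit matrices `G m` intertwine
the double transfer matrices at `x` and at `x + 2`, and `G 0` matches the initial data up to the
diagonal matrix `diag(T, Δ)`, where `T / Δ` is the claimed ratio. Hence, if `A' / B'` is an
approximant at `x + 2` of even index, `T A' / (Δ B')` is a mediant with positive weights of two
consecutive approximants at `x`; in the limit `T / Δ * F(x + 2) = F(x)`. Convergence holds because
the approximants are the partial sums of an alternating series whose terms decrease to zero: their
reciprocals grow at least like the partial sums of `∑ √(b (n + 1) * b (n + 2) / a (n + 2))`, which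
here dominates a harmonic series.
-/

open Filter

noncomputable def cfA (a b : ℕ → ℝ) : ℕ → ℝ
  | 0 => 1
  | 1 => b 0
  | n + 2 => b (n + 1) * cfA a b (n + 1) + a (n + 1) * cfA a b n

noncomputable def cfB (a b : ℕ → ℝ) : ℕ → ℝ
  | 0 => 0
  | 1 => 1
  | n + 2 => b (n + 1) * cfB a b (n + 1) + a (n + 1) * cfB a b n

/-- The continued fraction `b 0 + K_{n=1}^∞ (a n / b n)` converges to `v`. -/
def CFConvergesTo (a b : ℕ → ℝ) (v : ℝ) : Prop :=
  (∀ᶠ n in atTop, cfB a b n ≠ 0) ∧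
    Tendsto (fun n => cfA a b n / cfB a b n) atTop (nhds v)
/-- `a_{2m} = (2m−α−β)(2m−α)(2m−β)/4`, `a_{2m−1} = (2m−2+α+β)(2m−2+α)(2m−2+β)/4`. -/
noncomputable def aSeq (α β : ℝ) : ℕ → ℝ := fun n =>
  if n % 2 = 0 then
    ((n : ℝ) - α - β) * ((n : ℝ) - α) * ((n : ℝ) - β) / 4
  else
    ((n : ℝ) - 1 + α + β) * ((n : ℝ) - 1 + α) * ((n : ℝ) - 1 + β) / 4

/-- `b_0 = (y+2(1−α−β))/2`, `b_{2m}(y) = y+2(1−α−β)`, `b_{2m−1}(y) = (2m−1)y`. -/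
noncomputable def bSeq (α β : ℝ) (y : ℝ) : ℕ → ℝ := fun n =>
  if n = 0 then (y + 2 * (1 - α - β)) / 2
  else if n % 2 = 0 then y + 2 * (1 - α - β) else (n : ℝ) * y

open Topology Matrix

theorem tendsto_mediant {ι 𝕜 : Type*} [Field 𝕜] [LinearOrder 𝕜] [IsStrictOrderedRing 𝕜]
    [TopologicalSpace 𝕜] [OrderTopology 𝕜] {l : Filter ι} {p r a b c d : ι → 𝕜} {v : 𝕜}
    (hp : ∀ᶠ i in l, 0 < p i) (hr : ∀ᶠ i in l, 0 ≤ r i)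
    (hb : ∀ᶠ i in l, 0 < b i) (hd : ∀ᶠ i in l, 0 < d i)
    (hab : Tendsto (fun i => a i / b i) l (𝓝 v)) (hcd : Tendsto (fun i => c i / d i) l (𝓝 v)) :
    Tendsto (fun i => (p i * a i + r i * c i) / (p i * b i + r i * d i)) l (𝓝 v) := by
  have hmin := hab.min hcd
  have hmax := hab.max hcd
  rw [min_self] at hmin
  rw [max_self] at hmax
  refine tendsto_of_tendsto_of_tendsto_of_le_of_le' hmin hmax ?_ ?_
  · filter_upwards [hp, hr, hb, hd] with i hp hr hb hd
    have hden : 0 < p i * b i + r i * d i := by positivity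
    have ha := (le_div_iff₀ hb).1 (min_le_left (a i / b i) (c i / d i))
    have hc := (le_div_iff₀ hd).1 (min_le_right (a i / b i) (c i / d i))
    rw [le_div_iff₀ hden]
    linear_combination p i * ha + r i * hc
  · filter_upwards [hp, hr, hb, hd] with i hp hr hb hd
    have hden : 0 < p i * b i + r i * d i := by positivity
    have ha := (div_le_iff₀ hb).1 (le_max_left (a i / b i) (c i / d i))
    have hc := (div_le_iff₀ hd).1 (le_max_right (a i / b i) (c i / d i))
    rw [div_le_iff₀ hden]
    linear_combination p i * ha + r i * hc

section ContinuedFraction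

variable {a b : ℕ → ℝ}

/-- The matrix of one step of the three-term recurrence: it sends `(X (n + 1), X n)` to
`(X (n + 2), X (n + 1))`. -/
def transferMatrix (a b : ℕ → ℝ) (n : ℕ) : Matrix (Fin 2) (Fin 2) ℝ :=
  !![b (n + 1), a (n + 1); 1, 0]

/-- Two consecutive canonical numerators and denominators. In the usual indexing, which starts at
`-1`, the rows are `(A_n, B_n)` and `(A_{n-1}, B_{n-1})`. -/
noncomputable def convergentMatrix (a b : ℕ → ℝ) (n : ℕ) : Matrix (Fin 2) (Fin 2) ℝ :=
  !![cfA a b (n + 1), cfB a b (n + 1); cfA a b n, cfB a b n]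

theorem convergentMatrix_zero : convergentMatrix a b 0 = !![b 0, 1; 1, 0] := rfl

theorem convergentMatrix_succ (n : ℕ) :
    convergentMatrix a b (n + 1) = transferMatrix a b n * convergentMatrix a b n := by
  simp [convergentMatrix, transferMatrix, cfA, cfB]

theorem det_convergentMatrix (n : ℕ) :
    (convergentMatrix a b n).det = (-1) ^ (n + 1) * ∏ i ∈ Finset.range n, a (i + 1) := by
  induction n with
  | zero => simp [convergentMatrix_zero]
  | succ n ih =>
    rw [convergentMatrix_succ, det_mul, ih, transferMatrix, det_fin_two_of,
      Finset.prod_range_succ]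
    ring

theorem cfB_succ_pos (ha : ∀ n, 0 < a (n + 1)) (hb : ∀ n, 0 < b (n + 1)) :
    ∀ n, 0 < cfB a b (n + 1)
  | 0 => one_pos
  | 1 => by simpa [cfB] using hb 0
  | n + 2 => add_pos (mul_pos (hb _) (cfB_succ_pos ha hb (n + 1)))
      (mul_pos (ha _) (cfB_succ_pos ha hb n))

/-- The reciprocal of the distance between the consecutive approximants with indices `n` and
`n + 1`; its growth governs convergence. -/
noncomputable def invGap (a b : ℕ → ℝ) (n : ℕ) : ℝ :=
  cfB a b (n + 1) * cfB a b (n + 2) / ∏ i ∈ Finset.range (n + 1), a (i + 1)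

theorem invGap_pos (ha : ∀ n, 0 < a (n + 1)) (hb : ∀ n, 0 < b (n + 1)) (n : ℕ) :
    0 < invGap a b n :=
  div_pos (mul_pos (cfB_succ_pos ha hb n) (cfB_succ_pos ha hb (n + 1)))
    (Finset.prod_pos fun i _ => ha i)

theorem invGap_succ_sub (ha : ∀ n, a (n + 1) ≠ 0) (n : ℕ) :
    invGap a b (n + 1) - invGap a b n =
      b (n + 2) * cfB a b (n + 2) ^ 2 / ∏ i ∈ Finset.range (n + 2), a (i + 1) := by
  have hP : ∏ i ∈ Finset.range (n + 1), a (i + 1) ≠ 0 := Finset.prod_ne_zero_iff.2 fun i _ => ha i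
  have ha' : a (n + 2) ≠ 0 := ha (n + 1)
  have hB : cfB a b (n + 3) = b (n + 2) * cfB a b (n + 2) + a (n + 2) * cfB a b (n + 1) := rfl
  rw [invGap, invGap, Finset.prod_range_succ _ (n + 1), hB]
  field_simp
  ring

theorem invGap_monotone (ha : ∀ n, 0 < a (n + 1)) (hb : ∀ n, 0 < b (n + 1)) :
    Monotone (invGap a b) := by
  refine monotone_nat_of_le_succ fun n => sub_nonneg.1 ?_
  rw [invGap_succ_sub fun n => (ha n).ne']
  exact div_nonneg (mul_nonneg (hb (n + 1)).le (sq_nonneg _))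
    (Finset.prod_nonneg fun i _ => (ha i).le)

theorem invGap_sub_mul_invGap_sub (ha : ∀ n, a (n + 1) ≠ 0) (n : ℕ) :
    (invGap a b (n + 1) - invGap a b n) * (invGap a b (n + 2) - invGap a b (n + 1)) =
      b (n + 2) * b (n + 3) / a (n + 3) * invGap a b (n + 1) ^ 2 := by
  have hP : ∏ i ∈ Finset.range (n + 2), a (i + 1) ≠ 0 := Finset.prod_ne_zero_iff.2 fun i _ => ha i
  have ha' : a (n + 3) ≠ 0 := ha (n + 2)
  rw [invGap_succ_sub ha, invGap_succ_sub ha, invGap, Finset.prod_range_succ _ (n + 2)]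
  field_simp

theorem two_mul_sqrt_mul_invGap_le (ha : ∀ n, 0 < a (n + 1)) (hb : ∀ n, 0 < b (n + 1)) (n : ℕ) :
    2 * (√(b (n + 2) * b (n + 3) / a (n + 3)) * invGap a b (n + 1)) ≤
      invGap a b (n + 2) - invGap a b n := by
  have hmono := invGap_monotone ha hb
  have hquot : 0 ≤ b (n + 2) * b (n + 3) / a (n + 3) :=
    div_nonneg (mul_nonneg (hb (n + 1)).le (hb (n + 2)).le) (ha (n + 2)).le
  have hprod := invGap_sub_mul_invGap_sub (b := b) (fun n => (ha n).ne') n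
  refine le_of_sq_le_sq ?_ (sub_nonneg.2 (hmono (by lia)))
  rw [mul_pow, mul_pow, Real.sq_sqrt hquot, ← hprod]
  linear_combination
    four_mul_le_sq_add (invGap a b (n + 1) - invGap a b n) (invGap a b (n + 2) - invGap a b (n + 1))

theorem invGap_zero_mul_sum_sqrt_le (ha : ∀ n, 0 < a (n + 1)) (hb : ∀ n, 0 < b (n + 1)) (n : ℕ) :
    invGap a b 0 * ∑ i ∈ Finset.range n, √(b (i + 2) * b (i + 3) / a (i + 3)) ≤
      invGap a b (n + 1) := by
  have hmono := invGap_monotone ha hb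
  suffices h : 2 * (invGap a b 0 * ∑ i ∈ Finset.range n, √(b (i + 2) * b (i + 3) / a (i + 3))) ≤
      invGap a b (n + 1) + invGap a b n by
    linarith [hmono n.le_succ]
  induction n with
  | zero => simpa using add_nonneg (invGap_pos ha hb 1).le (invGap_pos ha hb 0).le
  | succ n ih =>
    have hstep := two_mul_sqrt_mul_invGap_le ha hb n
    have hzero := mul_le_mul_of_nonneg_left (hmono (Nat.zero_le (n + 1)))
      (Real.sqrt_nonneg (b (n + 2) * b (n + 3) / a (n + 3)))
    rw [Finset.sum_range_succ]
    linarith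

theorem tendsto_invGap_atTop (ha : ∀ n, 0 < a (n + 1)) (hb : ∀ n, 0 < b (n + 1))
    (hab : ¬ Summable fun n => √(b (n + 1) * b (n + 2) / a (n + 2))) :
    Tendsto (invGap a b) atTop atTop := by
  rw [← summable_nat_add_iff 1,
    not_summable_iff_tendsto_nat_atTop_of_nonneg fun n => Real.sqrt_nonneg _] at hab
  rw [← tendsto_add_atTop_iff_nat 1]
  exact tendsto_atTop_mono (invGap_zero_mul_sum_sqrt_le ha hb)
    (hab.const_mul_atTop (invGap_pos ha hb 0))

theorem cfA_div_cfB_succ_sub (hB : ∀ n, cfB a b (n + 1) ≠ 0) (n : ℕ) :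
    cfA a b (n + 2) / cfB a b (n + 2) - cfA a b (n + 1) / cfB a b (n + 1) =
      (-1) ^ n * (invGap a b n)⁻¹ := by
  have hdet := det_convergentMatrix (a := a) (b := b) (n + 1)
  rw [convergentMatrix, det_fin_two_of] at hdet
  rw [invGap, inv_div, div_sub_div _ _ (hB (n + 1)) (hB n), ← mul_div_assoc,
    mul_comm (cfB a b (n + 1))]
  congr 1
  linear_combination hdet

theorem cfA_div_cfB_succ (hB : ∀ n, cfB a b (n + 1) ≠ 0) (n : ℕ) :
    cfA a b (n + 1) / cfB a b (n + 1) =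
      b 0 + ∑ i ∈ Finset.range n, (-1) ^ i * (invGap a b i)⁻¹ := by
  rw [← Finset.sum_congr rfl fun i _ => cfA_div_cfB_succ_sub hB i,
    Finset.sum_range_sub fun n => cfA a b (n + 1) / cfB a b (n + 1)]
  simp [cfA, cfB]

theorem exists_cfConvergesTo_of_not_summable_sqrt (ha : ∀ n, 0 < a (n + 1))
    (hb : ∀ n, 0 < b (n + 1)) (hab : ¬ Summable fun n => √(b (n + 1) * b (n + 2) / a (n + 2))) :
    ∃ v, CFConvergesTo a b v ∧ b 0 ≤ v := by
  have hB : ∀ n, cfB a b (n + 1) ≠ 0 := fun n => (cfB_succ_pos ha hb n).ne'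
  have hanti : Antitone fun n => (invGap a b n)⁻¹ := fun i j hij =>
    inv_anti₀ (invGap_pos ha hb i) (invGap_monotone ha hb hij)
  obtain ⟨l, hl⟩ := hanti.tendsto_alternating_series_of_tendsto_zero
    (tendsto_inv_atTop_zero.comp (tendsto_invGap_atTop ha hb hab))
  have hl_nonneg : 0 ≤ l := by simpa using hanti.alternating_series_le_tendsto hl 0
  refine ⟨b 0 + l, ⟨?_, ?_⟩, le_add_of_nonneg_right hl_nonneg⟩
  · exact eventually_atTop.2 ⟨1, fun n hn => by simpa [Nat.sub_add_cancel hn] using hB (n - 1)⟩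
  · rw [← tendsto_add_atTop_iff_nat 1]
    simpa only [cfA_div_cfB_succ hB] using hl.const_add (b 0)

theorem CFConvergesTo.eq_div_mul_of_mediant {a' b' : ℕ → ℝ} {v v' s t : ℝ} {p r : ℕ → ℝ}
    (hv : CFConvergesTo a b v) (hv' : CFConvergesTo a' b' v')
    (hB : ∀ n, 0 < cfB a b (n + 1)) (hp : ∀ m, 0 < p m) (hr : ∀ m, 0 ≤ r m)
    (hA' : ∀ m, p m * cfA a b (2 * m + 1) + r m * cfA a b (2 * m) = s * cfA a' b' (2 * m + 1))
    (hB' : ∀ m, p m * cfB a b (2 * m + 1) + r m * cfB a b (2 * m) = t * cfB a' b' (2 * m + 1)) :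
    v = s / t * v' := by
  have heven : Tendsto (fun m : ℕ => 2 * m) atTop atTop :=
    (strictMono_mul_left_of_pos two_pos).tendsto_atTop
  have hodd : Tendsto (fun m : ℕ => 2 * m + 1) atTop atTop :=
    (tendsto_add_atTop_nat 1).comp heven
  have hmediant := tendsto_mediant (.of_forall hp) (.of_forall hr)
    (.of_forall fun m => hB (2 * m)) ((heven.eventually_ge_atTop 1).mono fun m hm => by
      simpa [Nat.sub_add_cancel hm] using hB (2 * m - 1))
    (hv.2.comp hodd) (hv.2.comp heven)
  refine tendsto_nhds_unique hmediant (((hv'.2.comp hodd).const_mul (s / t)).congr fun m => ?_)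
  simp only [Function.comp_apply, hA', hB', mul_div_mul_comm]

end ContinuedFraction

section Coefficients

variable {α β : ℝ}

theorem aSeq_odd (α β : ℝ) (m : ℕ) :
    aSeq α β (2 * m + 1) = (2 * m + α + β) * (2 * m + α) * (2 * m + β) / 4 := by
  have hodd : (2 * m + 1) % 2 ≠ 0 := by lia
  simp only [aSeq, if_neg hodd]
  push_cast
  ring

theorem aSeq_even (α β : ℝ) (m : ℕ) :
    aSeq α β (2 * m) = (2 * m - α - β) * (2 * m - α) * (2 * m - β) / 4 := by
  simp [aSeq]

theorem bSeq_odd (α β y : ℝ) (m : ℕ) : bSeq α β y (2 * m + 1) = (2 * m + 1) * y := by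
  simp [bSeq]

theorem bSeq_even_succ (α β y : ℝ) (m : ℕ) :
    bSeq α β y (2 * (m + 1)) = y + 2 * (1 - α - β) := by
  simp [bSeq]

theorem aSeq_succ_pos (hα : 0 < α) (hβ : 0 < β) (hαβ : α + β < 2) (n : ℕ) :
    0 < aSeq α β (n + 1) := by
  obtain ⟨m, rfl | rfl⟩ := n.even_or_odd'
  · rw [aSeq_odd]
    positivity
  · have : (0 : ℝ) ≤ m := m.cast_nonneg
    have hαβ' : 0 < 2 * ((m : ℝ) + 1) - α - β := by linarith
    have hα' : 0 < 2 * ((m : ℝ) + 1) - α := by linarith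
    have hβ' : 0 < 2 * ((m : ℝ) + 1) - β := by linarith
    rw [show 2 * m + 1 + 1 = 2 * (m + 1) by ring, aSeq_even]
    push_cast
    positivity

theorem aSeq_add_two_le (hα : 0 < α) (hβ : 0 < β) (hαβ : α + β < 2) (n : ℕ) :
    aSeq α β (n + 2) ≤ (n + 2) ^ 2 * (n + 1) := by
  obtain ⟨m, rfl | rfl⟩ := n.even_or_odd'
  · have : (0 : ℝ) ≤ m := m.cast_nonneg
    rw [show 2 * m + 2 = 2 * (m + 1) by ring, aSeq_even]
    push_cast
    calc (2 * ((m : ℝ) + 1) - α - β) * (2 * (m + 1) - α) * (2 * (m + 1) - β) / 4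
        ≤ (2 * m + 2) * (2 * m + 2) * (2 * m + 2) / 4 := by
          gcongr <;> linarith
      _ = (2 * m + 2) ^ 2 * ((m + 1) / 2) := by ring
      _ ≤ (2 * m + 2) ^ 2 * (2 * m + 1) := by gcongr; linarith
  · rw [show 2 * m + 1 + 2 = 2 * (m + 1) + 1 by ring, aSeq_odd]
    push_cast
    have hamgm : (2 * ((m : ℝ) + 1) + α) * (2 * (m + 1) + β) ≤ (2 * m + 3) ^ 2 := by
      nlinarith [sq_nonneg (α - β), m.cast_nonneg (α := ℝ)]
    calc (2 * ((m : ℝ) + 1) + α + β) * (2 * (m + 1) + α) * (2 * (m + 1) + β) / 4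
        = (2 * (m + 1) + α + β) * ((2 * (m + 1) + α) * (2 * (m + 1) + β)) / 4 := by ring
      _ ≤ (2 * m + 4) * (2 * m + 3) ^ 2 / 4 := by
          gcongr ?_ * ?_ / 4
          linarith
      _ = (2 * m + 3) ^ 2 * ((m + 2) / 2) := by ring
      _ ≤ (2 * m + 1 + 2) ^ 2 * (2 * m + 1 + 1) := by
          gcongr ?_ ^ 2 * ?_ <;> linarith [m.cast_nonneg (α := ℝ)]

variable {y : ℝ}

theorem bSeq_succ_pos (hy : 0 < y) (hz : 0 < y + 2 * (1 - α - β)) (n : ℕ) :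
    0 < bSeq α β y (n + 1) := by
  obtain ⟨m, rfl | rfl⟩ := n.even_or_odd'
  · rw [bSeq_odd]
    positivity
  · rwa [show 2 * m + 1 + 1 = 2 * (m + 1) by ring, bSeq_even_succ]

theorem le_bSeq_mul_bSeq (hy : 0 < y) (hz : 0 < y + 2 * (1 - α - β)) (n : ℕ) :
    y * (y + 2 * (1 - α - β)) * (n + 1) ≤ bSeq α β y (n + 1) * bSeq α β y (n + 2) := by
  obtain ⟨m, rfl | rfl⟩ := n.even_or_odd'
  · rw [show 2 * m + 2 = 2 * (m + 1) by ring, bSeq_odd, bSeq_even_succ]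
    push_cast
    linarith
  · rw [show 2 * m + 1 + 1 = 2 * (m + 1) by ring, show 2 * m + 1 + 2 = 2 * (m + 1) + 1 by ring,
      bSeq_odd, bSeq_even_succ]
    push_cast
    linarith [mul_pos hy hz]

theorem not_summable_sqrt_bSeq_mul_bSeq_div_aSeq (hα : 0 < α) (hβ : 0 < β) (hαβ : α + β < 2)
    (hy : 0 < y) (hz : 0 < y + 2 * (1 - α - β)) :
    ¬ Summable fun n => √(bSeq α β y (n + 1) * bSeq α β y (n + 2) / aSeq α β (n + 2)) := by
  set k := y * (y + 2 * (1 - α - β))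
  have hk_pos : 0 < k := mul_pos hy hz
  have hharmonic : ¬ Summable fun n : ℕ => √k * (1 / ((n + 2 : ℕ) : ℝ)) := by
    rw [summable_mul_left_iff (Real.sqrt_pos.2 hk_pos).ne',
      summable_nat_add_iff (f := fun n : ℕ => 1 / (n : ℝ)) 2]
    exact Real.not_summable_one_div_natCast
  refine fun h => hharmonic (h.of_nonneg_of_le (fun n => by positivity) fun n => ?_)
  refine Real.le_sqrt_of_sq_le ?_
  rw [mul_pow, Real.sq_sqrt hk_pos.le, le_div_iff₀ (aSeq_succ_pos hα hβ hαβ (n + 1))]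
  push_cast
  calc k * (1 / ((n : ℝ) + 2)) ^ 2 * aSeq α β (n + 2)
      ≤ k * (1 / ((n : ℝ) + 2)) ^ 2 * ((n + 2) ^ 2 * (n + 1)) := by
        gcongr
        exact aSeq_add_two_le hα hβ hαβ n
    _ = k * (n + 1) := by field_simp
    _ ≤ bSeq α β y (n + 1) * bSeq α β y (n + 2) := le_bSeq_mul_bSeq hy hz n

theorem exists_cfConvergesTo_aSeq_bSeq (hα : 0 < α) (hβ : 0 < β) (hαβ : α + β < 2)
    (hy : 0 < y) (hz : 0 < y + 2 * (1 - α - β)) :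
    ∃ v, CFConvergesTo (aSeq α β) (bSeq α β y) v ∧ 0 < v := by
  obtain ⟨v, hv, hbv⟩ := exists_cfConvergesTo_of_not_summable_sqrt
    (aSeq_succ_pos hα hβ hαβ) (bSeq_succ_pos hy hz)
    (not_summable_sqrt_bSeq_mul_bSeq_div_aSeq hα hβ hαβ hy hz)
  exact ⟨v, hv, (half_pos hz).trans_le (by simpa [bSeq] using hbv)⟩

end Coefficients

section Gauge

/-- The matrix intertwining the double steps `2 * m, 2 * m + 1` of the continued fractions for
`F(x)` and `F(x + 2)`. -/
noncomputable def gaugeMatrix (α β x : ℝ) (m : ℕ) : Matrix (Fin 2) (Fin 2) ℝ :=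
  !![(x + 4 - 2 * α - 2 * β) * ((x + 2 - α) * (x + 2 - β) + 4 * m * (x + 2 + 2 * m)),
      4 * (x + 4 - 2 * α - 2 * β) * aSeq α β (2 * m + 1);
    8 * (x + 2) * m,
      (x + 2) * ((x + 2 - α - 2 * β) * (x + 2 - 2 * α - β) +
        4 * m * (2 * m - 2 - x + 2 * α + 2 * β))]

theorem gaugeMatrix_succ_mul_transferMatrix (α β x : ℝ) (m : ℕ) :
    gaugeMatrix α β x (m + 1) * (transferMatrix (aSeq α β) (bSeq α β x) (2 * m + 1) *
        transferMatrix (aSeq α β) (bSeq α β x) (2 * m)) =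
      transferMatrix (aSeq α β) (bSeq α β (x + 2)) (2 * m + 1) *
        transferMatrix (aSeq α β) (bSeq α β (x + 2)) (2 * m) * gaugeMatrix α β x m := by
  simp only [gaugeMatrix, transferMatrix, show 2 * m + 1 + 1 = 2 * (m + 1) by ring, aSeq_odd,
    aSeq_even, bSeq_odd, bSeq_even_succ, mul_fin_two]
  push_cast
  ext i j
  fin_cases i <;> fin_cases j <;> dsimp <;> ring

theorem gaugeMatrix_zero_mul_convergentMatrix (α β x : ℝ) :
    gaugeMatrix α β x 0 * convergentMatrix (aSeq α β) (bSeq α β x) 0 =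
      convergentMatrix (aSeq α β) (bSeq α β (x + 2)) 0 *
        !![(x + 2 - α - 2 * β) * (x + 2) * (x + 2 - 2 * α - β), 0;
          0, (x + 2 - α) * (x + 4 - 2 * α - 2 * β) * (x + 2 - β)] := by
  simp only [gaugeMatrix, convergentMatrix_zero, aSeq_odd, bSeq, if_true, mul_fin_two]
  push_cast
  ext i j
  fin_cases i <;> fin_cases j <;> dsimp <;> ring

theorem gaugeMatrix_mul_convergentMatrix (α β x : ℝ) (m : ℕ) :
    gaugeMatrix α β x m * convergentMatrix (aSeq α β) (bSeq α β x) (2 * m) =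
      convergentMatrix (aSeq α β) (bSeq α β (x + 2)) (2 * m) *
        !![(x + 2 - α - 2 * β) * (x + 2) * (x + 2 - 2 * α - β), 0;
          0, (x + 2 - α) * (x + 4 - 2 * α - 2 * β) * (x + 2 - β)] := by
  induction m with
  | zero => exact gaugeMatrix_zero_mul_convergentMatrix α β x
  | succ m ih =>
    rw [show 2 * (m + 1) = 2 * m + 1 + 1 by ring]
    simp only [convergentMatrix_succ, Matrix.mul_assoc]
    rw [← ih]
    simp only [← Matrix.mul_assoc, ← gaugeMatrix_succ_mul_transferMatrix]

theorem gaugeMatrix_zero_zero_pos {α β x : ℝ} (hα : 0 < α) (hβ : 0 < β) (hαβ : α + β < 2)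
    (hx : 0 < x) (m : ℕ) : 0 < gaugeMatrix α β x m 0 0 := by
  have hz : 0 < x + 4 - 2 * α - 2 * β := by linarith
  have hxα : 0 < x + 2 - α := by linarith
  have hxβ : 0 < x + 2 - β := by linarith
  rw [gaugeMatrix, of_apply, cons_val_zero, cons_val_zero]
  positivity

end Gauge

theorem stmt17_general (α β : ℝ) (hα : 0 < α) (hβ : 0 < β) (hαβ : α + β < 2)
    (x : ℝ) (hx : 0 < x) (hz : 0 < x + 2 * (1 - α - β)) :
    ∃ F1 F2 : ℝ, CFConvergesTo (aSeq α β) (bSeq α β x) F1 ∧ 0 < F1 ∧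
      CFConvergesTo (aSeq α β) (bSeq α β (x + 2)) F2 ∧ 0 < F2 ∧
      F1 / F2 = (x + 2 - α - 2 * β) * (x + 2) * (x + 2 - 2 * α - β) /
        ((x + 2 - α) * (x + 4 - 2 * α - 2 * β) * (x + 2 - β)) := by
  obtain ⟨F1, hF1, hF1_pos⟩ := exists_cfConvergesTo_aSeq_bSeq hα hβ hαβ hx hz
  obtain ⟨F2, hF2, hF2_pos⟩ :=
    exists_cfConvergesTo_aSeq_bSeq hα hβ hαβ (y := x + 2) (by linarith) (by linarith)
  refine ⟨F1, F2, hF1, hF1_pos, hF2, hF2_pos, (div_eq_iff hF2_pos.ne').2 ?_⟩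
  have ha := aSeq_succ_pos hα hβ hαβ
  have hgauge := gaugeMatrix_mul_convergentMatrix α β x
  refine hF1.eq_div_mul_of_mediant hF2 (cfB_succ_pos ha (bSeq_succ_pos hx hz))
    (p := fun m => gaugeMatrix α β x m 0 0) (r := fun m => gaugeMatrix α β x m 0 1)
    (gaugeMatrix_zero_zero_pos hα hβ hαβ hx) (fun m => ?_) (fun m => ?_) (fun m => ?_)
  · exact mul_nonneg (by linarith) (ha (2 * m)).le
  · simpa [convergentMatrix, mul_apply, mul_comm] using congr_fun₂ (hgauge m) 0 0
  · simpa [convergentMatrix, mul_apply, mul_comm] using congr_fun₂ (hgauge m) 0 1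

theorem stmt17 (α β : ℝ) (hα0 : 0 < α) (hα1 : α < 1) (hβ0 : 0 < β) (hβ1 : β < 1)
    (x : ℝ) (hx : 2 < x) :
    ∃ F1 F2 : ℝ, CFConvergesTo (aSeq α β) (bSeq α β x) F1 ∧ 0 < F1 ∧
      CFConvergesTo (aSeq α β) (bSeq α β (x + 2)) F2 ∧ 0 < F2 ∧
      F1 / F2 = (x + 2 - α - 2 * β) * (x + 2) * (x + 2 - 2 * α - β) /
        ((x + 2 - α) * (x + 4 - 2 * α - 2 * β) * (x + 2 - β)) := by
  exact stmt17_general α β hα0 hβ0 (by linarith) x (by linarith) (by linarith)
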